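/- Let Γ be a set of path-quantified LTL formulae such that every existential formula ∃ψ ∈ Γ has satisfiable kernel ψ (i.e. some infinite word satisfies ψ). Then every minimal inconsistent subset of Γ contains at most one existential formula. -/

import Mathlib

/-!
If `Δ₁` and `Δ₂` contain the same universal formulae, the union of a model of `Δ₁` and a model of
`Δ₂` is a model of `Δ₁ ∪ Δ₂`: universal formulae hold in both parts, and existential witnesses
survive in the union. Two distinct existential formulae `∃ψ₁` and `∃ψ₂` of a minimal inconsistent
`Δ` would split it as `Δ = (Δ \ {∃ψ₁}) ∪ (Δ \ {∃ψ₂})`, a union of two consistent sets with the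
same universal formulae.
-/

/-- LTL formulae over atomic propositions `AP`:
    `φ ::= p | ¬φ | φ∧φ | Xφ | φUφ`. -/
inductive LTL (AP : Type) : Type
  | atom : AP → LTL AP
  | not  : LTL AP → LTL AP
  | and  : LTL AP → LTL AP → LTL AP
  | next : LTL AP → LTL AP
  | until_ : LTL AP → LTL AP → LTL AP

/-- An infinite word over `AP` is a function `ℕ → 2^AP`. -/
def Word (AP : Type) : Type := ℕ → Set AP

/-- The `i`-th suffix of a word. -/
def Word.suffix {AP : Type} (w : Word AP) (i : ℕ) : Word AP := fun n => w (n + i)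

/-- Satisfaction of an LTL formula on an infinite word. -/
def Sat {AP : Type} : Word AP → LTL AP → Prop
  | w, .atom p     => p ∈ w 0
  | w, .not φ      => ¬ Sat w φ
  | w, .and φ ψ    => Sat w φ ∧ Sat w ψ
  | w, .next φ     => Sat (w.suffix 1) φ
  | w, .until_ φ ψ => ∃ i, Sat (w.suffix i) ψ ∧ ∀ j < i, Sat (w.suffix j) φ

namespace LTL

/-- `φ ∨ ψ := ¬(¬φ ∧ ¬ψ)`. -/
def or {AP : Type} (φ ψ : LTL AP) : LTL AP := LTL.not ((LTL.not φ).and (LTL.not ψ))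

/-- `φ ⇒ ψ := ¬(φ ∧ ¬ψ)`. -/
def imp {AP : Type} (φ ψ : LTL AP) : LTL AP := LTL.not (φ.and (LTL.not ψ))

/-- `φ ⇔ ψ := (φ⇒ψ) ∧ (ψ⇒φ)`. -/
def iff_ {AP : Type} (φ ψ : LTL AP) : LTL AP := (φ.imp ψ).and (ψ.imp φ)

/-- `F φ := true U φ` (using the tautology `¬(φ ∧ ¬φ)` as `true`). -/
def F {AP : Type} (φ : LTL AP) : LTL AP := LTL.until_ (LTL.not (φ.and (LTL.not φ))) φ

/-- `G φ := ¬F¬φ`. -/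
def G {AP : Type} (φ : LTL AP) : LTL AP := LTL.not (LTL.F (LTL.not φ))

end LTL

/-- Path-quantified LTL formulae: `∀φ` or `∃φ` for quantifier-free `φ`. -/
inductive PQLTL (AP : Type) : Type
  | all : LTL AP → PQLTL AP
  | ex  : LTL AP → PQLTL AP

/-- Satisfaction of a path-quantified formula in a model, abstracted as a
    set `W` of infinite words. -/
def PQSat {AP : Type} (W : Set (Word AP)) : PQLTL AP → Prop
  | .all φ => ∀ w ∈ W, Sat w φ
  | .ex φ  => ∃ w ∈ W, Sat w φ

/-- A set `Γ` of path-quantified formulae is consistent if some nonempty set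
    of infinite words satisfies all its members. -/
def Consistent {AP : Type} (Γ : Set (PQLTL AP)) : Prop :=
  ∃ W : Set (Word AP), W.Nonempty ∧ ∀ γ ∈ Γ, PQSat W γ

/-- `φ` is redundant w.r.t. `Γ`: every nonempty model of `Γ` satisfies `φ`. -/
def Redundant {AP : Type} (Γ : Set (PQLTL AP)) (φ : PQLTL AP) : Prop :=
  ∀ W : Set (Word AP), W.Nonempty → (∀ γ ∈ Γ, PQSat W γ) → PQSat W φ

theorem pqSat_all_union {AP : Type} {W₁ W₂ : Set (Word AP)} {φ : LTL AP} :
    PQSat (W₁ ∪ W₂) (.all φ) ↔ PQSat W₁ (.all φ) ∧ PQSat W₂ (.all φ) :=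
  forall₂_or_left

theorem pqSat_ex_union {AP : Type} {W₁ W₂ : Set (Word AP)} {φ : LTL AP} :
    PQSat (W₁ ∪ W₂) (.ex φ) ↔ PQSat W₁ (.ex φ) ∨ PQSat W₂ (.ex φ) := by
  simp only [PQSat, Set.mem_union, or_and_right, exists_or]

theorem Consistent.union_of_all_mem_iff {AP : Type} {Δ₁ Δ₂ : Set (PQLTL AP)}
    (h₁ : Consistent Δ₁) (h₂ : Consistent Δ₂)
    (hall : ∀ φ : LTL AP, PQLTL.all φ ∈ Δ₁ ↔ PQLTL.all φ ∈ Δ₂) : Consistent (Δ₁ ∪ Δ₂) := by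
  obtain ⟨W₁, hne, hW₁⟩ := h₁
  obtain ⟨W₂, -, hW₂⟩ := h₂
  refine ⟨W₁ ∪ W₂, hne.inl, ?_⟩
  rintro (φ | ψ) hγ
  · have hφ₁ : PQLTL.all φ ∈ Δ₁ := hγ.elim id (hall φ).mpr
    exact pqSat_all_union.mpr ⟨hW₁ _ hφ₁, hW₂ _ ((hall φ).mp hφ₁)⟩
  · exact pqSat_ex_union.mpr (hγ.imp (hW₁ _) (hW₂ _))

theorem minimal_inconsistent_at_most_one_existential_general {AP : Type} {Δ : Set (PQLTL AP)}
    (hΔ : Minimal (¬ Consistent ·) Δ) : {ψ : LTL AP | PQLTL.ex ψ ∈ Δ}.Subsingleton := by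
  intro ψ₁ h₁ ψ₂ h₂
  by_contra hne
  have consistent_erase {γ : PQLTL AP} (hγ : γ ∈ Δ) : Consistent (Δ \ {γ}) :=
    not_not.mp (hΔ.not_prop_of_ssubset (Set.sdiff_singleton_ssubset.mpr hγ))
  have erase_union_erase : Δ \ {.ex ψ₁} ∪ Δ \ {.ex ψ₂} = Δ := by
    rw [← Set.sdiff_inter, Set.singleton_inter_eq_empty.mpr (by simpa using hne), Set.sdiff_empty]
  have same_universals (φ : LTL AP) :
      PQLTL.all φ ∈ Δ \ {.ex ψ₁} ↔ PQLTL.all φ ∈ Δ \ {.ex ψ₂} := by simp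
  exact hΔ.prop (erase_union_erase ▸
    (consistent_erase h₁).union_of_all_mem_iff (consistent_erase h₂) same_universals)

/-- if every existential formula in `Γ` has a satisfiable kernel,
    then every minimal inconsistent subset of `Γ` contains at most one
    existential formula. -/
theorem minimal_inconsistent_at_most_one_existential {AP : Type}
    (Γ : Set (PQLTL AP))
    (hker : ∀ ψ : LTL AP, PQLTL.ex ψ ∈ Γ → ∃ w : Word AP, Sat w ψ)
    (Δ : Set (PQLTL AP)) (hΔΓ : Δ ⊆ Γ)
    (hincon : ¬ Consistent Δ)
    (hmin : ∀ Δ' : Set (PQLTL AP), Δ' ⊂ Δ → Consistent Δ') :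
    ∀ ψ₁ ψ₂ : LTL AP, PQLTL.ex ψ₁ ∈ Δ → PQLTL.ex ψ₂ ∈ Δ → ψ₁ = ψ₂ :=
  fun _ _ h₁ h₂ => minimal_inconsistent_at_most_one_existential_general
    (Set.minimal_iff_forall_ssubset.mpr ⟨hincon, fun Δ' h => not_not.mpr (hmin Δ' h)⟩) h₁ h₂
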